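/- arXiv:2309.12007 — 3 statements merged into one kernel-verified Lean document; each statement's English description precedes it below -/
import Mathlib

section
/- Suppose that for every k ≥ 0 the submodule Nᵏ is a greatest element of the set Sₖ of submodules P ⊆ h⁻ᵏN that are fd-comparable with N (i.e., Nᵏ ∈ Sₖ and P ⊆ Nᵏ for every P ∈ Sₖ). Then for every i ≥ 0 one has: Nⁱ ⊆ N^{i+1}, h·N^{i+1} ⊆ Nⁱ, and Nⁱ = N^{i+1} ∩ h⁻ⁱN. -/
/-- For a central element `c` of `A`, scalar multiplication by `c` is an
`A`-linear endomorphism of any left `A`-module `M`. -/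
def centralSMul {A : Type*} [Ring A] (M : Type*) [AddCommGroup M] [Module A M]
    (c : A) (hc : ∀ a : A, Commute c a) : M →ₗ[A] M where
  toFun m := c • m
  map_add' := smul_add c
  map_smul' a m := by
    simp only [RingHom.id_apply, smul_smul, (hc a).eq]

/-- For a central element `h` of `A` and `k : ℕ`, the submodule
`h⁻ᵏN = {m ∈ M : hᵏ • m ∈ N}`. -/
def hPow_preimage {A : Type*} [Ring A] {M : Type*} [AddCommGroup M] [Module A M]
    (h : A) (hc : ∀ a : A, Commute h a) (k : ℕ) (N : Submodule A M) :
    Submodule A M :=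
  N.comap (centralSMul M (h ^ k) (fun a => (hc a).pow_left k))

/-- Two submodules `N₁, N₂` of a module `M` over a (not necessarily commutative)
ring `A` are fd-comparable if both `N₁/(N₁ ⊓ N₂)` and `N₂/(N₁ ⊓ N₂)` have finite
length as `A`-modules. -/
def FdComparable {A : Type*} [Ring A] {M : Type*} [AddCommGroup M] [Module A M]
    (N₁ N₂ : Submodule A M) : Prop :=
  IsFiniteLength A (N₁ ⧸ ((N₁ ⊓ N₂).comap N₁.subtype)) ∧
  IsFiniteLength A (N₂ ⧸ ((N₁ ⊓ N₂).comap N₂.subtype))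

/-!
Fd-comparability is stable under images and preimages along linear maps, hence under `· ⊔ K`
(image followed by preimage along `M → M ⧸ K`) and under `· ⊓ K` (preimage followed by image along
`K → M`). If `f` maps `N` into itself, then `f(N) + N = N = N ∩ f⁻ⁱN`, so `f(Nⁱ⁺¹) + N` and
`Nⁱ⁺¹ ∩ f⁻ⁱN` are again fd-comparable with `N`. Both are contained in `f⁻ⁱN`, hence in `Nⁱ` by
maximality.
-/

section

variable {A M M' : Type*} [Ring A] [AddCommGroup M] [Module A M] [AddCommGroup M'] [Module A M']

theorem isFiniteLength_map_quotient_map {P N : Submodule A M} (f : M →ₗ[A] M')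
    (hPN : IsFiniteLength A (P ⧸ N.submoduleOf P)) :
    IsFiniteLength A (P.map f ⧸ (N.map f).submoduleOf (P.map f)) := by
  have hle : N.submoduleOf P ≤ ((N.map f).submoduleOf (P.map f)).comap (f.submoduleMap P) :=
    fun _ hx => Submodule.mem_map_of_mem (Submodule.mem_comap.1 hx)
  refine hPN.of_surjective (f := Submodule.mapQ _ _ _ hle) ?_
  rw [← LinearMap.range_eq_top, Submodule.range_mapQ,
    LinearMap.range_eq_top.2 (f.submoduleMap_surjective P), Submodule.map_top,
    Submodule.range_mkQ]

theorem isFiniteLength_comap_quotient_comap {P N : Submodule A M'} (f : M →ₗ[A] M')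
    (hPN : IsFiniteLength A (P ⧸ N.submoduleOf P)) :
    IsFiniteLength A (P.comap f ⧸ (N.comap f).submoduleOf (P.comap f)) := by
  have hcomap : (N.comap f).submoduleOf (P.comap f) =
      (N.submoduleOf P).comap (f.submoduleComap P) := rfl
  refine hPN.of_injective (f := Submodule.mapQ _ _ _ hcomap.le) ?_
  rw [← LinearMap.ker_eq_bot, Submodule.ker_mapQ, ← hcomap, Submodule.mkQ_map_self]

theorem fdComparable_iff {P N : Submodule A M} :
    FdComparable P N ↔
      IsFiniteLength A (P ⧸ N.submoduleOf P) ∧ IsFiniteLength A (N ⧸ P.submoduleOf N) := by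
  have hP : (P ⊓ N).comap P.subtype = N.submoduleOf P := by
    rw [Submodule.comap_inf, Submodule.comap_subtype_self, top_inf_eq, Submodule.submoduleOf]
  have hN : (P ⊓ N).comap N.subtype = P.submoduleOf N := by
    rw [Submodule.comap_inf, Submodule.comap_subtype_self, inf_top_eq, Submodule.submoduleOf]
  rw [FdComparable, hP, hN]

namespace FdComparable

theorem map {P N : Submodule A M} (hPN : FdComparable P N) (f : M →ₗ[A] M') :
    FdComparable (P.map f) (N.map f) :=
  have ⟨hP, hN⟩ := fdComparable_iff.1 hPN
  fdComparable_iff.2 ⟨isFiniteLength_map_quotient_map f hP, isFiniteLength_map_quotient_map f hN⟩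

theorem comap {P N : Submodule A M'} (hPN : FdComparable P N) (f : M →ₗ[A] M') :
    FdComparable (P.comap f) (N.comap f) :=
  have ⟨hP, hN⟩ := fdComparable_iff.1 hPN
  fdComparable_iff.2
    ⟨isFiniteLength_comap_quotient_comap f hP, isFiniteLength_comap_quotient_comap f hN⟩

theorem sup_left {P N : Submodule A M} (hPN : FdComparable P N) (K : Submodule A M) :
    FdComparable (K ⊔ P) (K ⊔ N) := by
  simpa only [Submodule.comap_map_mkQ] using (hPN.map K.mkQ).comap K.mkQ

theorem inf_left {P N : Submodule A M} (hPN : FdComparable P N) (K : Submodule A M) :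
    FdComparable (K ⊓ P) (K ⊓ N) := by
  simpa only [Submodule.map_comap_subtype] using (hPN.comap K.subtype).map K.subtype

end FdComparable

end

theorem hPow_preimage_eq_comap_pow {A M : Type*} [Ring A] [AddCommGroup M] [Module A M]
    (h : A) (hc : ∀ a : A, Commute h a) (k : ℕ) (N : Submodule A M) :
    hPow_preimage h hc k N = N.comap (centralSMul M h hc ^ k) := by
  have hpow : centralSMul M (h ^ k) (fun a => (hc a).pow_left k) = centralSMul M h hc ^ k := by
    ext m
    rw [Module.End.pow_apply]
    exact (smul_iterate_apply h k m).symm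
  rw [hPow_preimage, hpow]

theorem maximal_lattices_chain_general {A M : Type*} [Ring A] [AddCommGroup M] [Module A M]
    (f : Module.End A M) {N : Submodule A M} (hN : N ∈ f.invtSubmodule)
    (Nseq : ℕ → Submodule A M)
    (hmax : ∀ k : ℕ, IsGreatest {P | P ≤ N.comap (f ^ k) ∧ FdComparable P N} (Nseq k)) (i : ℕ) :
    Nseq i ≤ Nseq (i + 1) ∧ Nseq (i + 1) ≤ (Nseq i).comap f ∧
      Nseq i = Nseq (i + 1) ⊓ N.comap (f ^ i) := by
  have hNpow : N ≤ N.comap (f ^ i) := N.le_comap_pow_of_le_comap hN i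
  obtain ⟨⟨hi, hi_fd⟩, hi_max⟩ := hmax i
  obtain ⟨⟨hsucc, hsucc_fd⟩, hsucc_max⟩ := hmax (i + 1)
  have hle : Nseq i ≤ Nseq (i + 1) := by
    refine hsucc_max ⟨hi.trans ?_, hi_fd⟩
    rw [pow_succ', Module.End.mul_eq_comp, Submodule.comap_comp]
    exact Submodule.comap_mono hN
  have hmap : N ⊔ (Nseq (i + 1)).map f ≤ Nseq i := by
    refine hi_max ⟨sup_le hNpow ?_, ?_⟩
    · rwa [Submodule.map_le_iff_le_comap, ← Submodule.comap_comp, ← Module.End.mul_eq_comp,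
        ← pow_succ]
    · simpa only [sup_eq_left.2 (Submodule.map_le_iff_le_comap.2 hN)]
        using (hsucc_fd.map f).sup_left N
  have hinf : N.comap (f ^ i) ⊓ Nseq (i + 1) ≤ Nseq i := by
    refine hi_max ⟨inf_le_left, ?_⟩
    simpa only [inf_eq_right.2 hNpow] using hsucc_fd.inf_left (N.comap (f ^ i))
  exact ⟨hle, Submodule.map_le_iff_le_comap.1 (le_sup_right.trans hmap),
    le_antisymm (le_inf hle hi) ((inf_comm _ _).trans_le hinf)⟩

/-- If for every `k` the submodule `Nseq k` is a greatest element of the set of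
submodules of `h⁻ᵏN` that are fd-comparable with `N`, then for every `i` one has
`Nⁱ ⊆ N^{i+1}`, `h·N^{i+1} ⊆ Nⁱ` and `Nⁱ = N^{i+1} ∩ h⁻ⁱN`. -/
theorem maximal_lattices_chain {A : Type*} [Ring A] {M : Type*} [AddCommGroup M]
    [Module A M] (h : A) (hc : ∀ a : A, Commute h a) (N : Submodule A M)
    (Nseq : ℕ → Submodule A M)
    (hmax : ∀ k : ℕ, (Nseq k ≤ hPow_preimage h hc k N ∧ FdComparable (Nseq k) N) ∧
      ∀ P : Submodule A M, P ≤ hPow_preimage h hc k N → FdComparable P N →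
        P ≤ Nseq k) :
    ∀ i : ℕ, Nseq i ≤ Nseq (i + 1) ∧
      (∀ m ∈ Nseq (i + 1), h • m ∈ Nseq i) ∧
      Nseq i = Nseq (i + 1) ⊓ hPow_preimage h hc i N := by
  simp only [hPow_preimage_eq_comap_pow] at hmax ⊢
  exact maximal_lattices_chain_general (centralSMul M h hc) (fun _ => N.smul_mem h) Nseq
    fun k => ⟨(hmax k).1, fun P hP => (hmax k).2 P hP.1 hP.2⟩
end

section
/- Let i ≥ 1 and let N, P₀, P₁, P₂ be submodules of M with P₁ ⊆ P₂, such that h·P₂ ⊆ P₁, P₁ = P₂ ∩ {m ∈ M : hⁱm ∈ N}, and P₀ = P₁ ∩ {m ∈ M : h^{i-1}m ∈ N}. Then h·P₁ ⊆ P₀ and h·P₂ ∩ P₀ = h·P₁; in particular, the map hP₂/hP₁ → P₁/P₀ induced by the inclusions hP₂ ⊆ P₁ and hP₁ ⊆ P₀ is a well-defined injective module homomorphism. -/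
/-- For a central element `h` of `A`, the submodule `h·P = {h • p : p ∈ P}`. -/
def hSmul {A : Type*} [Ring A] {M : Type*} [AddCommGroup M] [Module A M]
    (h : A) (hc : ∀ a : A, Commute h a) (P : Submodule A M) : Submodule A M :=
  P.map (centralSMul M h hc)

theorem hPow_preimage_succ {A : Type*} [Ring A] {M : Type*} [AddCommGroup M] [Module A M]
    (h : A) (hc : ∀ a : A, Commute h a) (k : ℕ) (N : Submodule A M) :
    hPow_preimage h hc (k + 1) N = (hPow_preimage h hc k N).comap (centralSMul M h hc) := by
  ext m
  change h ^ (k + 1) • m ∈ N ↔ h ^ k • h • m ∈ N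
  rw [pow_succ, mul_smul]

theorem mapQ_injective_iff {R R₂ M M₂ : Type*} [Ring R] [Ring R₂] [AddCommGroup M]
    [AddCommGroup M₂] [Module R M] [Module R₂ M₂] {σ : R →+* R₂} {p : Submodule R M}
    {q : Submodule R₂ M₂} {f : M →ₛₗ[σ] M₂} (hf : p ≤ q.comap f) :
    Function.Injective (p.mapQ q f hf) ↔ q.comap f ≤ p := by
  rw [← LinearMap.ker_eq_bot, Submodule.ker_mapQ, ← LinearMap.le_ker_iff_map, Submodule.ker_mkQ]

section LinearMap

variable {R M M' : Type*} [Ring R] [AddCommGroup M] [AddCommGroup M'] [Module R M] [Module R M']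

theorem exists_injective_quotient_of_inf_eq {S T K L : Submodule R M} (hST : S ≤ T)
    (hK : S ⊓ L = K) :
    ∃ φ : (S ⧸ K.comap S.subtype) →ₗ[R] (T ⧸ L.comap T.subtype),
      Function.Injective φ ∧
      ∀ (x : M) (hxS : x ∈ S) (hxT : x ∈ T),
        φ (Submodule.Quotient.mk ⟨x, hxS⟩) = Submodule.Quotient.mk ⟨x, hxT⟩ := by
  have hKL : K ≤ L := hK.ge.trans inf_le_right
  refine ⟨Submodule.mapQ _ _ (Submodule.inclusion hST) fun _ hx ↦ hKL hx, ?_, fun _ _ _ ↦ rfl⟩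
  exact (mapQ_injective_iff _).2 fun x hx ↦ hK.le ⟨x.2, hx⟩

/-- Since `h⁻ⁱN` is the preimage of `Q = h^{-(i-1)}N` under multiplication by `h`, Step 2 is the
case where `f` is multiplication by `h`, `T₁ = P₁` and `T₀ = P₀`. -/
theorem step_two_embedding_general (f : M →ₗ[R] M') {P₁ P₂ : Submodule R M}
    {T₀ T₁ Q : Submodule R M'} (hPT : P₂.map f ≤ T₁) (hP₁ : P₁ = P₂ ⊓ Q.comap f)
    (hT₀ : T₀ = T₁ ⊓ Q) :
    P₁.map f ≤ T₀ ∧ P₂.map f ⊓ T₀ = P₁.map f ∧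
    ∃ φ : (P₂.map f ⧸ (P₁.map f).comap (P₂.map f).subtype) →ₗ[R] (T₁ ⧸ T₀.comap T₁.subtype),
      Function.Injective φ ∧
      ∀ (x : M') (hx₂ : x ∈ P₂.map f) (hx₁ : x ∈ T₁),
        φ (Submodule.Quotient.mk ⟨x, hx₂⟩) = Submodule.Quotient.mk ⟨x, hx₁⟩ := by
  have hinf : P₂.map f ⊓ T₀ = P₁.map f := calc
    P₂.map f ⊓ T₀ = P₂.map f ⊓ Q := by rw [hT₀, ← inf_assoc, inf_of_le_left hPT]
    _ = (P₂ ⊓ Q.comap f).map f := Submodule.map_inf_eq_map_inf_comap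
    _ = P₁.map f := by rw [hP₁]
  exact ⟨hinf.ge.trans inf_le_right, hinf, exists_injective_quotient_of_inf_eq hPT hinf⟩

end LinearMap

/-- Step 2 of the proof of Proposition 3.7: if `i ≥ 1`, `P₁ ⊆ P₂`, `h·P₂ ⊆ P₁`,
`P₁ = P₂ ∩ h⁻ⁱN` and `P₀ = P₁ ∩ h^{-(i-1)}N`, then `h·P₁ ⊆ P₀` and
`h·P₂ ∩ P₀ = h·P₁`; in particular the map `hP₂/hP₁ → P₁/P₀` induced by the
inclusions `hP₂ ⊆ P₁` and `hP₁ ⊆ P₀` is a well-defined injective homomorphism. -/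
theorem step_two_embedding {A : Type*} [Ring A] {M : Type*} [AddCommGroup M]
    [Module A M] (h : A) (hc : ∀ a : A, Commute h a) (i : ℕ) (hi : 1 ≤ i)
    (N P₀ P₁ P₂ : Submodule A M) (h12 : P₁ ≤ P₂)
    (hP21 : hSmul h hc P₂ ≤ P₁)
    (hP1 : P₁ = P₂ ⊓ hPow_preimage h hc i N)
    (hP0 : P₀ = P₁ ⊓ hPow_preimage h hc (i - 1) N) :
    hSmul h hc P₁ ≤ P₀ ∧ hSmul h hc P₂ ⊓ P₀ = hSmul h hc P₁ ∧
    ∃ φ : (↥(hSmul h hc P₂) ⧸ ((hSmul h hc P₁).comap (hSmul h hc P₂).subtype)) →ₗ[A]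
        (↥P₁ ⧸ (P₀.comap P₁.subtype)),
      Function.Injective φ ∧
      ∀ (x : M) (hx₂ : x ∈ hSmul h hc P₂) (hx₁ : x ∈ P₁),
        φ (Submodule.Quotient.mk ⟨x, hx₂⟩) = Submodule.Quotient.mk ⟨x, hx₁⟩ := by
  obtain ⟨k, rfl⟩ := Nat.exists_eq_add_of_le' hi
  exact step_two_embedding_general _ hP21 (hPow_preimage_succ h hc k N ▸ hP1) hP0
end

section
/- Assume that the quotient module M/(h−1)M has no nonzero A-submodule that is finite-dimensional over ℂ. Then every fd-comparability class of graded lattices in M has a greatest element: in each class there is a graded lattice containing every graded lattice of that class. In particular, each fd-comparability class of graded lattices contains a unique maximal element with respect to inclusion. -/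
/-- A graded lattice in a `ℤ`-graded module `M` (with grading `ℳ`) on which a
central element `h` acts bijectively: a finitely generated graded `A`-submodule
`N` with `M = ⋃_k h⁻ᵏ N`. -/
def IsGradedLattice {A : Type*} [Ring A] [Algebra ℂ A]
    {M : Type*} [AddCommGroup M] [Module A M] [Module ℂ M] [IsScalarTower ℂ A M]
    (ℳ : ℤ → Submodule ℂ M) [DirectSum.Decomposition ℳ]
    (h : A) (N : Submodule A M) : Prop :=
  N.FG ∧
  (∀ m ∈ N, ∀ j : ℤ, ((DirectSum.decompose ℳ m j : ℳ j) : M) ∈ N) ∧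
  (∀ m : M, ∃ k : ℕ, h ^ k • m ∈ N)

/-- Two submodules `N₁, N₂` are fd-comparable if both `N₁/(N₁ ⊓ N₂)` and
`N₂/(N₁ ⊓ N₂)` are finite dimensional over `ℂ`. -/
def FdComparableC {A : Type*} [Ring A] [Algebra ℂ A]
    {M : Type*} [AddCommGroup M] [Module A M] [Module ℂ M] [IsScalarTower ℂ A M]
    (N₁ N₂ : Submodule A M) : Prop :=
  FiniteDimensional ℂ (N₁ ⧸ ((N₁ ⊓ N₂).comap N₁.subtype)) ∧
  FiniteDimensional ℂ (N₂ ⧸ ((N₁ ⊓ N₂).comap N₂.subtype))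

/-!
A comparability class is closed under sums, so the question is whether the sum `S` of its members
is finitely generated. Let `N` be a member. Every finitely generated submodule of `S` is finite
modulo `N`; applied to `S ⊓ h⁻ᵏN`, which is finitely generated because `hᵏ` embeds it into `N`, this
shows that `S` agrees with `N` in high degrees and has finite components below the lowest degree
of `N`. Since `h` acts as the identity on `M / (h - 1) M`, the images there of the parts of `S` in
degrees `≤ b` are then finite for small `b`, and as `b → -∞` they decrease to an `A`-submodule,
which vanishes by hypothesis. A nonzero homogeneous element never lies in `(h - 1) M`, so `S` is
bounded below. Hence `hᵏ S ≤ N` for some `k`, and `S` is finitely generated.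
-/

section GradedModule

variable {ι K M : Type*} [DecidableEq ι] [Semiring K]

section Projection

variable [AddCommMonoid M] [Module K M] (ℳ : ι → Submodule K M) [DirectSum.Decomposition ℳ]

/-- The projection of a graded module onto its component of degree `i`, as an endomorphism of the
whole module. -/
def gradedProj (i : ι) : M →ₗ[K] M :=
  (ℳ i).subtype ∘ₗ DirectSum.component K ι (fun i => ℳ i) i ∘ₗ
    (DirectSum.decomposeLinearEquiv ℳ).toLinearMap

theorem gradedProj_mem (i : ι) (m : M) : gradedProj ℳ i m ∈ ℳ i :=
  (DirectSum.decompose ℳ m i).2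

variable {ℳ}

theorem gradedProj_of_mem_same {i : ι} {m : M} (hm : m ∈ ℳ i) : gradedProj ℳ i m = m :=
  DirectSum.decompose_of_mem_same ℳ hm

theorem gradedProj_of_mem_ne {i j : ι} {m : M} (hm : m ∈ ℳ i) (hij : i ≠ j) :
    gradedProj ℳ j m = 0 :=
  DirectSum.decompose_of_mem_ne ℳ hm hij

variable (ℳ) in
theorem exists_finset_le_ker_gradedProj_of_fg {E : Submodule K M} (hE : E.FG) :
    ∃ s : Finset ι, ∀ i ∉ s, E ≤ LinearMap.ker (gradedProj ℳ i) := by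
  have hle : E ≤ ⨆ i, ℳ i :=
    (DirectSum.Decomposition.isInternal ℳ).submodule_iSup_eq_top ▸ le_top
  obtain ⟨s, hs⟩ := CompleteLattice.IsCompactElement.exists_finset_of_le_iSup _
    ((Submodule.fg_iff_compact E).1 hE) ℳ hle
  exact ⟨s, fun i hi => hs.trans <| iSup₂_le fun j hj m hm =>
    gradedProj_of_mem_ne hm (ne_of_mem_of_not_mem hj hi)⟩

theorem gradedProj_map [Add ι] [IsLeftCancelAdd ι] {d : ι} {f : M →+ M}
    (hf : ∀ j, ∀ m ∈ ℳ j, f m ∈ ℳ (d + j)) (j : ι) (m : M) :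
    gradedProj ℳ (d + j) (f m) = f (gradedProj ℳ j m) := by
  induction m using DirectSum.Decomposition.inductionOn ℳ with
  | zero => simp only [map_zero]
  | @homogeneous i m =>
    obtain rfl | hij := eq_or_ne i j
    · rw [gradedProj_of_mem_same m.2, gradedProj_of_mem_same (hf i m m.2)]
    · rw [gradedProj_of_mem_ne m.2 hij, map_zero,
        gradedProj_of_mem_ne (hf i m m.2) ((add_right_injective d).ne hij)]
  | add x y hx hy => simp only [map_add, hx, hy]

end Projection

theorem exists_lowest_highest_degree [LinearOrder ι] [AddCommMonoid M] [Module K M]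
    (ℳ : ι → Submodule K M) [DirectSum.Decomposition ℳ] {y : M} (hy : y ≠ 0) :
    ∃ s t, s ≤ t ∧ gradedProj ℳ s y ≠ 0 ∧ gradedProj ℳ t y ≠ 0 ∧
      (∀ i < s, gradedProj ℳ i y = 0) ∧ ∀ i > t, gradedProj ℳ i y = 0 := by
  classical
  let supp : Finset ι := (DirectSum.decompose ℳ y).support
  have mem_supp (i : ι) : i ∈ supp ↔ gradedProj ℳ i y ≠ 0 :=
    DFinsupp.mem_support_iff.trans Submodule.coe_eq_zero.not.symm
  have hne : supp.Nonempty := by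
    rw [Finset.nonempty_iff_ne_empty, Ne, DFinsupp.support_eq_empty]
    exact (map_ne_zero_iff _ (DirectSum.decomposeAddEquiv ℳ).injective).2 hy
  exact ⟨supp.min' hne, supp.max' hne, supp.min'_le _ (supp.max'_mem hne),
    (mem_supp _).1 (supp.min'_mem hne), (mem_supp _).1 (supp.max'_mem hne),
    fun i hi => of_not_not fun h => hi.not_ge (supp.min'_le i ((mem_supp i).2 h)),
    fun i hi => of_not_not fun h => hi.not_ge (supp.le_max' i ((mem_supp i).2 h))⟩

/- For `y ≠ 0` with lowest degree `s` and highest degree `t`, the element `f y - y` has nonzero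
components in the two distinct degrees `s < d + t`. -/
theorem eq_zero_of_map_sub_self_mem [AddCommGroup ι] [LinearOrder ι] [IsOrderedAddMonoid ι]
    [AddCommGroup M] [Module K M] {ℳ : ι → Submodule K M} [DirectSum.Decomposition ℳ]
    {d : ι} (hd : 0 < d) {f : M →+ M} (hf : ∀ j, ∀ m ∈ ℳ j, f m ∈ ℳ (d + j))
    (hinj : Function.Injective f) {j : ι} {y : M} (hy : f y - y ∈ ℳ j) : y = 0 := by
  by_contra hy₀
  obtain ⟨s, t, hst, hs, ht, hlow, hhigh⟩ := exists_lowest_highest_degree ℳ hy₀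
  have hproj (i : ι) :
      gradedProj ℳ (d + i) (f y - y) = f (gradedProj ℳ i y) - gradedProj ℳ (d + i) y := by
    rw [map_sub, gradedProj_map hf]
  have degree_eq {i : ι} (hi : gradedProj ℳ i (f y - y) ≠ 0) : j = i :=
    of_not_not fun hji => hi (gradedProj_of_mem_ne hy hji)
  have hjs : j = s := by
    have hs' := hproj (s - d)
    rw [hlow _ (sub_lt_self s hd), map_zero, zero_sub, add_sub_cancel] at hs'
    exact degree_eq (hs' ▸ neg_ne_zero.2 hs)
  have hjt : j = d + t := by
    have ht' := hproj t
    rw [hhigh _ (lt_add_of_pos_left t hd), sub_zero] at ht'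
    exact degree_eq (ht' ▸ (map_ne_zero_iff f hinj).2 ht)
  exact (hst.trans_lt (lt_add_of_pos_left t hd)).ne (hjs.symm.trans hjt)

end GradedModule

theorem exists_fg_map_eq_of_surjective {R M N : Type*} [Semiring R] [AddCommMonoid M]
    [AddCommMonoid N] [Module R M] [Module R N] {f : M →ₗ[R] N} (hf : Function.Surjective f)
    {E : Submodule R N} (hE : E.FG) : ∃ E' : Submodule R M, E'.FG ∧ E'.map f = E := by
  obtain ⟨s, hs, rfl⟩ := Submodule.fg_def.1 hE
  refine ⟨Submodule.span R (Function.surjInv hf '' s), Submodule.fg_span (hs.image _), ?_⟩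
  simp only [Submodule.map_span, Set.image_image, Function.surjInv_eq, Set.image_id']

section AlmostLE

variable (K : Type*) {A M : Type*} [CommRing K] [Ring A] [Algebra K A] [AddCommGroup M] [Module A M]
  [Module K M] [IsScalarTower K A M]

/-- `P` is almost contained in `Q` if the image `(P + Q) / Q` of `P` in `M / Q` is finitely
generated over the base ring `K`. -/
def AlmostLE (P Q : Submodule A M) : Prop :=
  ((P.map Q.mkQ).restrictScalars K).FG

theorem finite_quotient_inf_iff_almostLE (P Q : Submodule A M) :
    Module.Finite K (P ⧸ (P ⊓ Q).comap P.subtype) ↔ AlmostLE K P Q := by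
  have hker : (P ⊓ Q).comap P.subtype = LinearMap.ker (Q.mkQ ∘ₗ P.subtype) := by
    rw [LinearMap.ker_comp, Submodule.ker_mkQ, Submodule.comap_inf, Submodule.comap_subtype_self,
      top_inf_eq]
  have hrange : LinearMap.range (Q.mkQ ∘ₗ P.subtype) = P.map Q.mkQ := by
    rw [LinearMap.range_comp, Submodule.range_subtype]
  rw [hker, Module.Finite.equiv_iff
    ((Q.mkQ ∘ₗ P.subtype).quotKerEquivRange.restrictScalars K), hrange]
  exact Module.Finite.iff_fg (N := (P.map Q.mkQ).restrictScalars K)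

theorem AlmostLE.refl (P : Submodule A M) : AlmostLE K P P := by
  rw [AlmostLE, Submodule.mkQ_map_self, Submodule.restrictScalars_bot]
  exact Submodule.fg_bot

variable {K} {P P' Q Q' : Submodule A M}

theorem AlmostLE.sup (h : AlmostLE K P Q) (h' : AlmostLE K P' Q) : AlmostLE K (P ⊔ P') Q := by
  rw [AlmostLE, Submodule.map_sup, Submodule.restrictScalars_sup]
  exact Submodule.FG.sup h h'

theorem AlmostLE.mono_left [IsNoetherianRing K] (h : AlmostLE K P Q) (hP : P' ≤ P) :
    AlmostLE K P' Q := by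
  have := isNoetherian_of_fg_of_noetherian _ h
  exact Submodule.FG.of_le_of_isNoetherian (T := (P.map Q.mkQ).restrictScalars K)
    (Submodule.map_mono hP)

theorem AlmostLE.mono_right (h : AlmostLE K P Q) (hQ : Q ≤ Q') : AlmostLE K P Q' := by
  have hmap : (P.map Q.mkQ).map (Submodule.factor hQ) = P.map Q'.mkQ := by
    rw [← Submodule.map_comp, Submodule.factor_comp_mk]
  rw [AlmostLE, ← hmap]
  exact Submodule.FG.map ((Submodule.factor hQ).restrictScalars K) h

theorem AlmostLE.exists_fg_le_sup (h : AlmostLE K P Q) :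
    ∃ E : Submodule K M, E.FG ∧ P.restrictScalars K ≤ Q.restrictScalars K ⊔ E := by
  obtain ⟨E, hE, hmap⟩ := exists_fg_map_eq_of_surjective
    (f := Q.mkQ.restrictScalars K) Q.mkQ_surjective h
  have hker : LinearMap.ker (Q.mkQ.restrictScalars K) = Q.restrictScalars K := by
    rw [LinearMap.ker_restrictScalars, Submodule.ker_mkQ]
  refine ⟨E, hE, ?_⟩
  rw [sup_comm, ← hker, ← Submodule.comap_map_eq, hmap]
  exact Submodule.le_comap_map Q.mkQ P

end AlmostLE

section HomogeneousSubmodule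

variable {ι K A M : Type*} [DecidableEq ι] [CommRing K] [Ring A] [Algebra K A] [AddCommGroup M]
  [Module A M] [Module K M] [IsScalarTower K A M] {ℳ : ι → Submodule K M}
  [DirectSum.Decomposition ℳ] {P Q : Submodule A M}

theorem AlmostLE.exists_fg_inf_le_sup_map (hQ : Q.IsHomogeneous ℳ) (h : AlmostLE K P Q) :
    ∃ E : Submodule K M, E.FG ∧ ∀ i, P.restrictScalars K ⊓ ℳ i ≤
      (Q.restrictScalars K ⊓ ℳ i) ⊔ E.map (gradedProj ℳ i) := by
  obtain ⟨E, hE, hle⟩ := h.exists_fg_le_sup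
  refine ⟨E, hE, fun i m ⟨hmP, hmi⟩ => ?_⟩
  obtain ⟨x, hx, e, he, rfl⟩ := Submodule.mem_sup.1 (hle hmP)
  rw [← gradedProj_of_mem_same hmi, map_add]
  exact Submodule.add_mem_sup ⟨hQ i hx, gradedProj_mem ℳ i x⟩ (Submodule.mem_map_of_mem he)

theorem AlmostLE.exists_finset_inf_le (hQ : Q.IsHomogeneous ℳ) (h : AlmostLE K P Q) :
    ∃ s : Finset ι, ∀ i ∉ s, P.restrictScalars K ⊓ ℳ i ≤ Q.restrictScalars K := by
  obtain ⟨E, hE, hle⟩ := h.exists_fg_inf_le_sup_map hQ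
  obtain ⟨s, hs⟩ := exists_finset_le_ker_gradedProj_of_fg ℳ hE
  refine ⟨s, fun i hi => (hle i).trans ?_⟩
  rw [LinearMap.le_ker_iff_map.1 (hs i hi), sup_bot_eq]
  exact inf_le_left

theorem AlmostLE.fg_inf_of_inf_eq_bot [IsNoetherianRing K] (hQ : Q.IsHomogeneous ℳ)
    (h : AlmostLE K P Q) {i : ι} (hi : Q.restrictScalars K ⊓ ℳ i = ⊥) :
    (P.restrictScalars K ⊓ ℳ i).FG := by
  obtain ⟨E, hE, hle⟩ := h.exists_fg_inf_le_sup_map hQ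
  have := isNoetherian_of_fg_of_noetherian _ (hE.map (gradedProj ℳ i))
  refine Submodule.FG.of_le_of_isNoetherian (T := E.map (gradedProj ℳ i)) ((hle i).trans ?_)
  rw [hi, bot_sup_eq]

end HomogeneousSubmodule

section GradedAction

theorem pow_smul_mem_graded {ι A M σ : Type*} [AddMonoid ι] [Monoid A] [MulAction A M]
    [SetLike σ M] {ℳ : ι → σ} {d : ι} {h : A} (hh : ∀ j, ∀ m ∈ ℳ j, h • m ∈ ℳ (d + j))
    (k : ℕ) {j : ι} {m : M} (hm : m ∈ ℳ j) : h ^ k • m ∈ ℳ (k • d + j) := by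
  induction k with
  | zero => rwa [pow_zero, one_smul, zero_nsmul, zero_add]
  | succ k ih =>
    rw [pow_succ', mul_smul, succ_nsmul', add_assoc]
    exact hh _ _ ih

variable {K A M : Type*} [CommRing K] [Ring A] [Algebra K A] [AddCommGroup M] [Module A M]
  [Module K M] {𝒜 : ℕ → Submodule K A} {ℳ : ℤ → Submodule K M}

theorem exists_forall_lt_gradedProj_eq_zero_of_fg [DirectSum.Decomposition 𝒜]
    [DirectSum.Decomposition ℳ]
    (hcompat : ∀ (i : ℕ) (j : ℤ), ∀ a ∈ 𝒜 i, ∀ m ∈ ℳ j, a • m ∈ ℳ ((i : ℤ) + j))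
    {N : Submodule A M} (hN : N.FG) :
    ∃ c : ℤ, ∀ m ∈ N, ∀ j < c, gradedProj ℳ j m = 0 := by
  obtain ⟨s, rfl⟩ := hN
  obtain ⟨F, hF⟩ := exists_finset_le_ker_gradedProj_of_fg ℳ (Submodule.fg_span s.finite_toSet)
  obtain ⟨c, hc⟩ := F.bddBelow
  refine ⟨c, fun m hm => ?_⟩
  induction hm using Submodule.span_induction with
  | mem x hx => exact fun j hj => hF j (fun hjF => hj.not_ge (hc hjF)) (Submodule.subset_span hx)
  | zero => exact fun j _ => map_zero _
  | add x y _ _ hx hy => exact fun j hj => by rw [map_add, hx j hj, hy j hj, add_zero]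
  | smul a x _ hx =>
    intro j hj
    induction a using DirectSum.Decomposition.inductionOn 𝒜 with
    | zero => rw [zero_smul, map_zero]
    | @homogeneous i a =>
      have hshift := gradedProj_map (f := DistribSMul.toAddMonoidHom M (a : A))
        (fun j m => hcompat i j a a.2 m) (j - i) x
      rw [add_sub_cancel, hx (j - i) (by omega), map_zero] at hshift
      exact hshift
    | add a b ha hb => rw [add_smul, map_add, ha, hb, add_zero]

end GradedAction

section LowDegreeImage

theorem exists_nsmul_add_mem_Ioc {d j b : ℤ} (hd : 0 < d) (hj : j ≤ b) :
    ∃ k : ℕ, k • d + j ∈ Finset.Ioc (b - d) b := by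
  refine ⟨((b - j) / d).toNat, Finset.mem_Ioc.2 ?_⟩
  rw [nsmul_eq_mul, Int.toNat_of_nonneg (Int.ediv_nonneg (sub_nonneg.2 hj) hd.le)]
  have hle := Int.ediv_mul_le (b - j) hd.ne'
  have hlt := Int.lt_ediv_add_one_mul_self (b - j) hd
  constructor <;> linarith

theorem exists_forall_le_of_monotone_of_isArtinian {ι R Q : Type*} [LinearOrder ι] [Semiring R]
    [AddCommMonoid Q] [Module R Q] {W : ι → Submodule R Q} (hW : Monotone W) (c : ι)
    [IsArtinian R (W c)] : ∃ b, ∀ i, W b ≤ W i := by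
  obtain ⟨_, ⟨b, rfl⟩, hb⟩ := IsArtinian.set_has_minimal
    (Set.range fun i => (W i).comap (W c).subtype) ⟨_, c, rfl⟩
  refine ⟨min b c, fun i => ?_⟩
  obtain hi | hi := le_total (min b c) i
  · exact hW hi
  intro x hx
  have hle : (W i).comap (W c).subtype ≤ (W b).comap (W c).subtype :=
    Submodule.comap_mono (hW (hi.trans (min_le_left b c)))
  have heq := eq_of_le_of_not_lt hle (hb _ ⟨i, rfl⟩)
  have hxb : (⟨x, hW (min_le_right b c) hx⟩ : W c) ∈ (W b).comap (W c).subtype :=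
    hW (min_le_left b c) hx
  exact heq.ge hxb

variable {K A M Q : Type*} [CommRing K] [Ring A] [Algebra K A] [AddCommGroup M] [Module A M]
  [Module K M] [IsScalarTower K A M] [AddCommGroup Q] [Module A Q] [Module K Q]
  [IsScalarTower K A Q] (ℳ : ℤ → Submodule K M) (q : M →ₗ[A] Q) (S : Submodule A M)

/-- The `K`-span in `Q` of the images of the homogeneous elements of `S` of degree at most `b`.
It is used with `Q = M / (h - 1) M`, which carries no grading but inherits this filtration. -/
def lowDegreeImage (b : ℤ) : Submodule K Q :=
  ⨆ j ≤ b, (S.restrictScalars K ⊓ ℳ j).map (q.restrictScalars K)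

theorem lowDegreeImage_mono : Monotone (lowDegreeImage ℳ q S) :=
  fun _ _ hb => biSup_mono fun _ hj => hj.trans hb

variable {ℳ q S}

theorem map_mem_lowDegreeImage {b j : ℤ} (hj : j ≤ b) {m : M} (hmS : m ∈ S) (hmj : m ∈ ℳ j) :
    q m ∈ lowDegreeImage ℳ q S b :=
  Submodule.mem_iSup_of_mem j <| Submodule.mem_iSup_of_mem hj ⟨m, ⟨hmS, hmj⟩, rfl⟩

theorem smul_mem_lowDegreeImage {i : ℕ} {a : A} (ha : ∀ j : ℤ, ∀ m ∈ ℳ j, a • m ∈ ℳ (i + j))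
    {b : ℤ} {x : Q} (hx : x ∈ lowDegreeImage ℳ q S b) :
    a • x ∈ lowDegreeImage ℳ q S (i + b) := by
  have hle : lowDegreeImage ℳ q S b ≤
      (lowDegreeImage ℳ q S (i + b)).comap (Algebra.lsmul K K Q a) := by
    refine iSup₂_le fun j hj => Submodule.map_le_iff_le_comap.2 fun m ⟨hmS, hmj⟩ => ?_
    change a • q m ∈ lowDegreeImage ℳ q S (i + b)
    rw [← map_smul]
    exact map_mem_lowDegreeImage (by omega) (S.smul_mem a hmS) (ha j m hmj)
  exact hle hx

variable (ℳ q S) in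
theorem exists_restrictScalars_eq_iInf_lowDegreeImage (𝒜 : ℕ → Submodule K A)
    [DirectSum.Decomposition 𝒜]
    (hcompat : ∀ (i : ℕ) (j : ℤ), ∀ a ∈ 𝒜 i, ∀ m ∈ ℳ j, a • m ∈ ℳ ((i : ℤ) + j)) :
    ∃ P : Submodule A Q, P.restrictScalars K = ⨅ b, lowDegreeImage ℳ q S b := by
  refine ⟨{ (⨅ b, lowDegreeImage ℳ q S b).toAddSubmonoid with
    smul_mem' := fun a x hx => ?_ }, rfl⟩
  change a • x ∈ ⨅ b, lowDegreeImage ℳ q S b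
  replace hx : ∀ b, x ∈ lowDegreeImage ℳ q S b := Submodule.mem_iInf _ |>.1 hx
  induction a using DirectSum.Decomposition.inductionOn 𝒜 with
  | zero => rw [zero_smul]; exact zero_mem _
  | @homogeneous i a =>
    refine (Submodule.mem_iInf _).2 fun b => ?_
    simpa only [add_sub_cancel] using
      smul_mem_lowDegreeImage (fun j => hcompat i j a a.2) (hx (b - i))
  | add a b ha hb => rw [add_smul]; exact add_mem ha hb

/- Since `q` does not distinguish `m` from `h • m`, the degrees in `(b - d, b]` already generate. -/
theorem fg_lowDegreeImage {d : ℕ} (hd : 0 < d) {h : A}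
    (hh : ∀ j : ℤ, ∀ m ∈ ℳ j, h • m ∈ ℳ (d + j)) (hq : ∀ m, q (h • m) = q m) {b : ℤ}
    (hS : ∀ j ≤ b, (S.restrictScalars K ⊓ ℳ j).FG) : (lowDegreeImage ℳ q S b).FG := by
  have hqpow (k : ℕ) (m : M) : q (h ^ k • m) = q m := by
    induction k with
    | zero => rw [pow_zero, one_smul]
    | succ k ih => rw [pow_succ', mul_smul, hq, ih]
  have heq : lowDegreeImage ℳ q S b =
      ⨆ j ∈ Finset.Ioc (b - d) b, (S.restrictScalars K ⊓ ℳ j).map (q.restrictScalars K) := by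
    refine le_antisymm (iSup₂_le fun j hj => ?_)
      (biSup_mono fun j hj => (Finset.mem_Ioc.1 hj).2)
    rintro _ ⟨m, ⟨hmS, hmj⟩, rfl⟩
    obtain ⟨k, hk⟩ := exists_nsmul_add_mem_Ioc (Int.natCast_pos.2 hd) hj
    refine hqpow k m ▸ ?_
    exact Submodule.mem_iSup_of_mem _ <| Submodule.mem_iSup_of_mem hk
      ⟨h ^ k • m, ⟨S.smul_mem _ hmS, pow_smul_mem_graded hh k hmj⟩, rfl⟩
  rw [heq]
  exact Submodule.fg_biSup _ _ fun j hj => (hS j (Finset.mem_Ioc.1 hj).2).map _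

theorem exists_forall_le_inf_le_ker [IsArtinianRing K] {𝒜 : ℕ → Submodule K A}
    [DirectSum.Decomposition 𝒜]
    (hcompat : ∀ (i : ℕ) (j : ℤ), ∀ a ∈ 𝒜 i, ∀ m ∈ ℳ j, a • m ∈ ℳ ((i : ℤ) + j))
    {d : ℕ} (hd : 0 < d) {h : A} (hh : ∀ j : ℤ, ∀ m ∈ ℳ j, h • m ∈ ℳ (d + j))
    (hq : ∀ m, q (h • m) = q m)
    (hnofd : ∀ P : Submodule A Q, Module.Finite K P → P = ⊥) {c : ℤ}
    (hS : ∀ j ≤ c, (S.restrictScalars K ⊓ ℳ j).FG) :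
    ∃ b, ∀ j ≤ b, ∀ m ∈ S, m ∈ ℳ j → q m = 0 := by
  have hfg := fg_lowDegreeImage hd hh hq hS
  have := isArtinian_of_fg_of_artinian _ hfg
  have := isNoetherian_of_fg_of_noetherian _ hfg
  obtain ⟨b, hb⟩ := exists_forall_le_of_monotone_of_isArtinian (lowDegreeImage_mono ℳ q S) c
  obtain ⟨P, hP⟩ := exists_restrictScalars_eq_iInf_lowDegreeImage ℳ q S 𝒜 hcompat
  have hPfin : Module.Finite K P := Module.Finite.iff_fg.2 <|
    Submodule.FG.of_le_of_isNoetherian (S := P.restrictScalars K) (hP.trans_le (iInf_le _ c))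
  refine ⟨b, fun j hj m hmS hmj => ?_⟩
  have hqm : q m ∈ P.restrictScalars K :=
    hP ▸ le_iInf hb (map_mem_lowDegreeImage hj hmS hmj)
  rwa [hnofd P hPfin, Submodule.restrictScalars_bot] at hqm

end LowDegreeImage

section Saturation

theorem fg_of_map_le_fg {A M M' : Type*} [Ring A] [IsNoetherianRing A] [AddCommGroup M]
    [AddCommGroup M'] [Module A M] [Module A M'] {f : M →ₗ[A] M'} (hf : Function.Injective f)
    {P : Submodule A M} {N : Submodule A M'} (hN : N.FG) (hPN : P.map f ≤ N) : P.FG := by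
  have := isNoetherian_of_fg_of_noetherian N hN
  exact Submodule.fg_of_fg_map_injective f hf (Submodule.FG.of_le_of_isNoetherian hPN)

variable {K A M : Type*} [CommRing K] [Ring A] [Algebra K A] [AddCommGroup M] [Module A M]
  [Module K M] [IsScalarTower K A M] {ℳ : ℤ → Submodule K M} {d : ℕ} {h : A}
  {N S : Submodule A M}

theorem exists_pow_forall_ge_smul_mem (hd : 0 < d) (hh : ∀ j : ℤ, ∀ m ∈ ℳ j, h • m ∈ ℳ (d + j))
    {C : ℤ} (hC : ∀ j > C, S.restrictScalars K ⊓ ℳ j ≤ N.restrictScalars K) (b : ℤ) :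
    ∃ k : ℕ, ∀ j ≥ b, ∀ m ∈ S, m ∈ ℳ j → h ^ k • m ∈ N := by
  refine ⟨(C + 1 - b).toNat, fun j hj m hmS hmj => ?_⟩
  refine hC _ ?_ ⟨S.smul_mem _ hmS, pow_smul_mem_graded hh _ hmj⟩
  have hle : ((C + 1 - b).toNat : ℤ) ≤ (C + 1 - b).toNat • (d : ℤ) :=
    le_mul_of_one_le_right (Int.natCast_nonneg _) (by exact_mod_cast hd)
  omega

variable [DirectSum.Decomposition ℳ]

theorem exists_forall_le_inf_eq_bot [IsArtinianRing K] {𝒜 : ℕ → Submodule K A}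
    [DirectSum.Decomposition 𝒜]
    (hcompat : ∀ (i : ℕ) (j : ℤ), ∀ a ∈ 𝒜 i, ∀ m ∈ ℳ j, a • m ∈ ℳ ((i : ℤ) + j))
    (hd : 0 < d) (hh : ∀ j : ℤ, ∀ m ∈ ℳ j, h • m ∈ ℳ (d + j)) (hc : ∀ a : A, Commute h a)
    (hinj : Function.Injective fun m : M => h • m)
    (hnofd : ∀ P : Submodule A
        (M ⧸ LinearMap.range (centralSMul M (h - 1)
          (fun a => (hc a).sub_left (Commute.one_left a)))),
      Module.Finite K P → P = ⊥) {c : ℤ} (hS : ∀ j ≤ c, (S.restrictScalars K ⊓ ℳ j).FG) :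
    ∃ b, ∀ j ≤ b, S.restrictScalars K ⊓ ℳ j = ⊥ := by
  set R := LinearMap.range (centralSMul M (h - 1) fun a => (hc a).sub_left (Commute.one_left a))
  have apply_sub_one (m : M) : centralSMul M (h - 1)
      (fun a => (hc a).sub_left (Commute.one_left a)) m = h • m - m := by
    simp only [centralSMul, LinearMap.coe_mk, AddHom.coe_mk, sub_smul, one_smul]
  have hq (m : M) : R.mkQ (h • m) = R.mkQ m :=
    (Submodule.Quotient.eq R).2 ⟨m, apply_sub_one m⟩
  obtain ⟨b, hb⟩ := exists_forall_le_inf_le_ker hcompat hd hh hq hnofd hS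
  refine ⟨b, fun j hj => eq_bot_iff.2 fun m ⟨hmS, hmj⟩ => ?_⟩
  obtain ⟨y, rfl⟩ := (Submodule.Quotient.mk_eq_zero R).1 (hb j hj m hmS hmj)
  rw [apply_sub_one] at hmj
  have hy : y = 0 := eq_zero_of_map_sub_self_mem (f := DistribSMul.toAddMonoidHom M h)
    (Int.natCast_pos.2 hd) hh hinj hmj
  rw [hy, map_zero]
  exact zero_mem _

theorem almostLE_inf_comap [IsNoetherianRing A] (hN : N.FG)
    (hS : ∀ P ≤ S, P.FG → AlmostLE K P N) {f : M →ₗ[A] M} (hf : Function.Injective f) :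
    AlmostLE K (S ⊓ N.comap f) N :=
  hS _ inf_le_left (fg_of_map_le_fg hf hN (Submodule.map_le_iff_le_comap.2 inf_le_right))

/- Beyond the degrees occurring in the finite module `(S ⊓ h⁻¹N) / N`, membership in `N` descends
from `h • m` to `m`. -/
theorem exists_forall_gt_inf_le [IsNoetherianRing A]
    (hh : ∀ j : ℤ, ∀ m ∈ ℳ j, h • m ∈ ℳ (d + j)) (hc : ∀ a : A, Commute h a)
    (hinj : Function.Injective fun m : M => h • m) (hN : N.FG) (hNhom : N.IsHomogeneous ℳ)
    (hSN : ∀ m ∈ S, ∃ k : ℕ, h ^ k • m ∈ N) (hS : ∀ P ≤ S, P.FG → AlmostLE K P N) :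
    ∃ C, ∀ j > C, S.restrictScalars K ⊓ ℳ j ≤ N.restrictScalars K := by
  obtain ⟨s, hs⟩ := (almostLE_inf_comap hN hS (f := centralSMul M h hc) hinj).exists_finset_inf_le
    hNhom
  obtain ⟨C, hC⟩ := s.bddAbove
  refine ⟨C, fun j hj m hm => ?_⟩
  obtain ⟨k, hk⟩ := hSN m hm.1
  induction k generalizing j m with
  | zero => rwa [pow_zero, one_smul] at hk
  | succ k ih =>
    rw [pow_succ, mul_smul] at hk
    have hmN : h • m ∈ N := ih (d + j) (by omega) _ ⟨S.smul_mem h hm.1, hh j m hm.2⟩ hk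
    exact hs j (fun hjs => (hC hjs).not_gt hj) ⟨⟨hm.1, hmN⟩, hm.2⟩

theorem injective_centralSMul_pow (hc : ∀ a : A, Commute h a)
    (hinj : Function.Injective fun m : M => h • m) (k : ℕ) :
    Function.Injective (centralSMul M (h ^ k) fun a => (hc a).pow_left k) := by
  have hiter := hinj.iterate k
  rwa [smul_iterate] at hiter

theorem fg_inf_of_forall_fg_almostLE [IsNoetherianRing K] [IsNoetherianRing A]
    (hc : ∀ a : A, Commute h a) (hinj : Function.Injective fun m : M => h • m) (hN : N.FG)
    (hNhom : N.IsHomogeneous ℳ) (hS : ∀ P ≤ S, P.FG → AlmostLE K P N) {j : ℤ}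
    (hNj : N.restrictScalars K ⊓ ℳ j = ⊥) {k : ℕ} (hk : ∀ m ∈ S, m ∈ ℳ j → h ^ k • m ∈ N) :
    (S.restrictScalars K ⊓ ℳ j).FG := by
  have hfg := (almostLE_inf_comap hN hS (injective_centralSMul_pow hc hinj k)).fg_inf_of_inf_eq_bot
    hNhom hNj
  convert hfg using 1
  exact le_antisymm (fun m ⟨hmS, hmj⟩ => ⟨⟨hmS, hk m hmS hmj⟩, hmj⟩)
    (inf_le_inf_right _ fun m hm => hm.1)

theorem fg_of_forall_fg_almostLE [IsArtinianRing K] [IsNoetherianRing A] {𝒜 : ℕ → Submodule K A}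
    [DirectSum.Decomposition 𝒜]
    (hcompat : ∀ (i : ℕ) (j : ℤ), ∀ a ∈ 𝒜 i, ∀ m ∈ ℳ j, a • m ∈ ℳ ((i : ℤ) + j))
    (hd : 0 < d) (hh : ∀ j : ℤ, ∀ m ∈ ℳ j, h • m ∈ ℳ (d + j)) (hc : ∀ a : A, Commute h a)
    (hinj : Function.Injective fun m : M => h • m)
    (hnofd : ∀ P : Submodule A
        (M ⧸ LinearMap.range (centralSMul M (h - 1)
          (fun a => (hc a).sub_left (Commute.one_left a)))),
      Module.Finite K P → P = ⊥)
    (hN : N.FG) (hNhom : N.IsHomogeneous ℳ) (hShom : S.IsHomogeneous ℳ)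
    (hSN : ∀ m ∈ S, ∃ k : ℕ, h ^ k • m ∈ N) (hS : ∀ P ≤ S, P.FG → AlmostLE K P N) : S.FG := by
  obtain ⟨C, hC⟩ := exists_forall_gt_inf_le hh hc hinj hN hNhom hSN hS
  have hpow := exists_pow_forall_ge_smul_mem hd hh hC
  obtain ⟨c, hNc⟩ := exists_forall_lt_gradedProj_eq_zero_of_fg hcompat hN
  have hfin : ∀ j ≤ c - 1, (S.restrictScalars K ⊓ ℳ j).FG := by
    intro j hj
    obtain ⟨k, hk⟩ := hpow j
    have hNj : N.restrictScalars K ⊓ ℳ j = ⊥ := eq_bot_iff.2 fun m ⟨hmN, hmj⟩ =>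
      (gradedProj_of_mem_same hmj).symm.trans (hNc m hmN j (by omega))
    exact fg_inf_of_forall_fg_almostLE hc hinj hN hNhom hS hNj (hk j le_rfl)
  obtain ⟨b, hb⟩ := exists_forall_le_inf_eq_bot hcompat hd hh hc hinj hnofd hfin
  obtain ⟨k, hk⟩ := hpow b
  refine fg_of_map_le_fg (injective_centralSMul_pow hc hinj k) hN
    (Submodule.map_le_iff_le_comap.2 fun m hm => ?_)
  classical
  rw [← DirectSum.sum_support_decompose ℳ m]
  refine Submodule.sum_mem _ fun j _ => ?_
  have hmj := (DirectSum.decompose ℳ m j).2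
  obtain hj | hj := le_total b j
  · exact hk j hj _ (hShom j hm) hmj
  · have hzero : ((DirectSum.decompose ℳ m j : ℳ j) : M) ∈ (⊥ : Submodule K M) :=
      hb j hj ▸ ⟨hShom j hm, hmj⟩
    rw [(Submodule.mem_bot K).1 hzero]
    exact zero_mem _

end Saturation

section LatticeClass

section Homogeneous

variable {ι K A M : Type*} [DecidableEq ι] [Semiring K] [Semiring A] [AddCommMonoid M]
  [Module K M] [Module A M] {ℳ : ι → Submodule K M} [DirectSum.Decomposition ℳ]

theorem isHomogeneous_sup {P Q : Submodule A M} (hP : P.IsHomogeneous ℳ)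
    (hQ : Q.IsHomogeneous ℳ) : (P ⊔ Q).IsHomogeneous ℳ := by
  intro i m hm
  obtain ⟨x, hx, y, hy, rfl⟩ := Submodule.mem_sup.1 hm
  rw [DirectSum.decompose_add, DirectSum.add_apply]
  exact Submodule.add_mem_sup (hP i hx) (hQ i hy)

theorem isHomogeneous_sSup_of_directedOn {T : Set (Submodule A M)} (hne : T.Nonempty)
    (hdir : DirectedOn (· ≤ ·) T) (hT : ∀ P ∈ T, P.IsHomogeneous ℳ) :
    (sSup T).IsHomogeneous ℳ := by
  intro i m hm
  obtain ⟨P, hP, hmP⟩ := (Submodule.mem_sSup_of_directed hne hdir).1 hm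
  exact le_sSup hP (hT P hP i hmP)

end Homogeneous

section Lattice

variable {K A M : Type*} [CommRing K] [Ring A] [AddCommGroup M] [Module A M] [Module K M]

/-- `IsGradedLattice` over an arbitrary commutative base ring, phrased so that the two agree
definitionally over `ℂ`. -/
def IsHomogeneousLattice (ℳ : ℤ → Submodule K M) [DirectSum.Decomposition ℳ] (h : A)
    (N : Submodule A M) : Prop :=
  N.FG ∧
  (∀ m ∈ N, ∀ j : ℤ, ((DirectSum.decompose ℳ m j : ℳ j) : M) ∈ N) ∧
  (∀ m : M, ∃ k : ℕ, h ^ k • m ∈ N)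

variable {ℳ : ℤ → Submodule K M} [DirectSum.Decomposition ℳ] {h : A} {N N₁ N₂ : Submodule A M}

theorem IsHomogeneousLattice.isHomogeneous (hN : IsHomogeneousLattice ℳ h N) :
    N.IsHomogeneous ℳ :=
  fun j m hm => hN.2.1 m hm j

theorem IsHomogeneousLattice.sup (h₁ : IsHomogeneousLattice ℳ h N₁)
    (h₂ : IsHomogeneousLattice ℳ h N₂) : IsHomogeneousLattice ℳ h (N₁ ⊔ N₂) :=
  ⟨h₁.1.sup h₂.1, fun _ hm j => isHomogeneous_sup h₁.isHomogeneous h₂.isHomogeneous j hm,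
    fun m => (h₁.2.2 m).imp fun _ hk => Submodule.mem_sup_left hk⟩

end Lattice

variable {K A M : Type*} [CommRing K] [Ring A] [Algebra K A] [AddCommGroup M] [Module A M]
  [Module K M] [IsScalarTower K A M]

variable (K) in
/-- `FdComparableC` over an arbitrary commutative base ring `K`, with finite-dimensionality
replaced by finite generation over `K`; the two agree definitionally over `ℂ`. -/
def FiniteComparable (N₁ N₂ : Submodule A M) : Prop :=
  Module.Finite K (N₁ ⧸ (N₁ ⊓ N₂).comap N₁.subtype) ∧
  Module.Finite K (N₂ ⧸ (N₁ ⊓ N₂).comap N₂.subtype)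

theorem finiteComparable_iff {N₁ N₂ : Submodule A M} :
    FiniteComparable K N₁ N₂ ↔ AlmostLE K N₁ N₂ ∧ AlmostLE K N₂ N₁ := by
  rw [FiniteComparable, finite_quotient_inf_iff_almostLE, inf_comm,
    finite_quotient_inf_iff_almostLE]

/-- The class of all graded lattices finitely comparable to `N`. -/
def latticeClass (ℳ : ℤ → Submodule K M) [DirectSum.Decomposition ℳ] (h : A)
    (N : Submodule A M) : Set (Submodule A M) :=
  {N' | IsHomogeneousLattice ℳ h N' ∧ FiniteComparable K N' N}

variable {ℳ : ℤ → Submodule K M} [DirectSum.Decomposition ℳ] {h : A} {N N₁ N₂ : Submodule A M}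

theorem IsHomogeneousLattice.mem_latticeClass (hN : IsHomogeneousLattice ℳ h N) :
    N ∈ latticeClass ℳ h N :=
  ⟨hN, finiteComparable_iff.2 ⟨.refl K N, .refl K N⟩⟩

theorem FiniteComparable.sup (h₁ : FiniteComparable K N₁ N) (h₂ : FiniteComparable K N₂ N) :
    FiniteComparable K (N₁ ⊔ N₂) N := by
  rw [finiteComparable_iff] at *
  exact ⟨h₁.1.sup h₂.1, h₁.2.mono_right le_sup_left⟩

variable (ℳ h N) in
theorem directedOn_latticeClass : DirectedOn (· ≤ ·) (latticeClass ℳ h N) :=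
  fun N₁ h₁ N₂ h₂ => ⟨N₁ ⊔ N₂, ⟨h₁.1.sup h₂.1, h₁.2.sup h₂.2⟩, le_sup_left, le_sup_right⟩

theorem exists_mem_latticeClass_ge_of_fg (hN : IsHomogeneousLattice ℳ h N) {P : Submodule A M}
    (hP : P.FG) (hle : P ≤ sSup (latticeClass ℳ h N)) : ∃ N' ∈ latticeClass ℳ h N, P ≤ N' :=
  (CompleteLattice.isCompactElement_iff_le_of_directed_sSup_le _ P).1
    ((Submodule.fg_iff_compact P).1 hP) _ ⟨N, hN.mem_latticeClass⟩
    (directedOn_latticeClass ℳ h N) hle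

theorem almostLE_of_fg_of_le_sSup_latticeClass [IsNoetherianRing K]
    (hN : IsHomogeneousLattice ℳ h N) {P : Submodule A M} (hP : P.FG)
    (hle : P ≤ sSup (latticeClass ℳ h N)) : AlmostLE K P N := by
  obtain ⟨N', ⟨-, hN'⟩, hPN'⟩ := exists_mem_latticeClass_ge_of_fg hN hP hle
  exact (finiteComparable_iff.1 hN').1.mono_left hPN'

end LatticeClass

theorem greatest_lattice_in_fd_class_general
    {K A : Type*} [CommRing K] [IsArtinianRing K] [Ring A] [Algebra K A]
    (𝒜 : ℕ → Submodule K A) [DirectSum.Decomposition 𝒜] [IsNoetherianRing A]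
    {d : ℕ} (hd : 0 < d) {h : A} (hhd : h ∈ 𝒜 d) (hc : ∀ a : A, Commute h a)
    {M : Type*} [AddCommGroup M] [Module A M] [Module K M] [IsScalarTower K A M]
    (ℳ : ℤ → Submodule K M) [DirectSum.Decomposition ℳ]
    (hcompat : ∀ (i : ℕ) (j : ℤ), ∀ a ∈ 𝒜 i, ∀ m ∈ ℳ j, a • m ∈ ℳ ((i : ℤ) + j))
    (hinj : Function.Injective (fun m : M => h • m))
    (hnofd : ∀ P : Submodule A
        (M ⧸ LinearMap.range (centralSMul M (h - 1)
          (fun a => (hc a).sub_left (Commute.one_left a)))),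
      Module.Finite K P → P = ⊥)
    {N : Submodule A M} (hN : IsHomogeneousLattice ℳ h N) :
    ∃ N₀ : Submodule A M, IsHomogeneousLattice ℳ h N₀ ∧ FiniteComparable K N₀ N ∧
      ∀ N' : Submodule A M, IsHomogeneousLattice ℳ h N' → FiniteComparable K N' N →
        N' ≤ N₀ := by
  have hhom : (sSup (latticeClass ℳ h N)).IsHomogeneous ℳ :=
    isHomogeneous_sSup_of_directedOn ⟨N, hN.mem_latticeClass⟩ (directedOn_latticeClass ℳ h N)
      fun _ hN' => hN'.1.isHomogeneous
  have hfg : (sSup (latticeClass ℳ h N)).FG :=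
    fg_of_forall_fg_almostLE hcompat hd (fun j m => hcompat d j h hhd m) hc hinj hnofd
      hN.1 hN.isHomogeneous hhom (fun m _ => hN.2.2 m)
      fun _ hle hP => almostLE_of_fg_of_le_sSup_latticeClass hN hP hle
  obtain ⟨N₀, ⟨hlattice, hcomp⟩, hle⟩ := exists_mem_latticeClass_ge_of_fg hN hfg le_rfl
  exact ⟨N₀, hlattice, hcomp, fun N' hlattice' hcomp' =>
    (le_sSup (show N' ∈ latticeClass ℳ h N from ⟨hlattice', hcomp'⟩)).trans hle⟩

/-- Proposition 3.7: let `A` be a left Noetherian `ℕ`-graded `ℂ`-algebra,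
`h ∈ A_d` central of degree `d > 0`, and `M` a compatibly `ℤ`-graded `A`-module
on which `h` acts bijectively. If `M/(h-1)M` has no nonzero finite-dimensional
`A`-submodule, then every fd-comparability class of graded lattices in `M` has
a greatest element. -/
theorem greatest_lattice_in_fd_class
    {A : Type*} [Ring A] [Algebra ℂ A] (𝒜 : ℕ → Submodule ℂ A) [GradedRing 𝒜]
    [IsNoetherianRing A]
    (d : ℕ) (hd : 0 < d) (h : A) (hhd : h ∈ 𝒜 d) (hc : ∀ a : A, Commute h a)
    {M : Type*} [AddCommGroup M] [Module A M] [Module ℂ M] [IsScalarTower ℂ A M]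
    (ℳ : ℤ → Submodule ℂ M) [DirectSum.Decomposition ℳ]
    (hcompat : ∀ (i : ℕ) (j : ℤ), ∀ a ∈ 𝒜 i, ∀ m ∈ ℳ j, a • m ∈ ℳ ((i : ℤ) + j))
    (hbij : Function.Bijective (fun m : M => h • m))
    (hnofd : ∀ P : Submodule A
        (M ⧸ LinearMap.range (centralSMul M (h - 1)
          (fun a => (hc a).sub_left (Commute.one_left a)))),
      FiniteDimensional ℂ P → P = ⊥) :
    ∀ N : Submodule A M, IsGradedLattice ℳ h N →
      ∃ N₀ : Submodule A M, IsGradedLattice ℳ h N₀ ∧ FdComparableC N₀ N ∧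
        ∀ N' : Submodule A M, IsGradedLattice ℳ h N' → FdComparableC N' N →
          N' ≤ N₀ :=
  fun _ hN => greatest_lattice_in_fd_class_general 𝒜 hd hhd hc ℳ hcompat hbij.injective hnofd hN
end
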